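/- arXiv:2503.09093 — 5 statements merged into one kernel-verified Lean document; each statement's English description precedes it below -/
import Mathlib

section
/- Let b ≥ 0, ρ > 0, R ≥ ρ and T ≥ 0 be real numbers. Define the token-bucket arrival curve α(t) = ρ·t + b and the rate-latency service curve β(t) = R·max(t − T, 0) for t ≥ 0. Then the horizontal deviation sup_{t ≥ 0} inf { d ≥ 0 : α(t) ≤ β(t + d) } equals T + b/R. -/
/-!
Where the arrival curve is positive, the service curve `β` can be inverted, and the delay of the
bit arriving at time `t` is `max 0 (T + α(t)/R − t)`. Since `α(t) ≤ R·t + b`, this never exceeds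
`T + b/R`, and it tends to `T + b/R` as `t → 0⁺`. The limit cannot be replaced by the value at
`t = 0`: if `α(0) = 0`, the delay there is `0`.
-/

open Filter Set Topology

/-- The virtual delay at time `t` of a flow with arrival curve `α` at a server with service curve
`β`, that is, the horizontal distance from the graph of `α` to that of `β` at height `α t`.
It takes the junk value `0` when `β` stays below `α t` from time `t` on. -/
noncomputable def virtualDelay (α β : ℝ → ℝ) (t : ℝ) : ℝ :=
  sInf {d | 0 ≤ d ∧ α t ≤ β (t + d)}

/-- The token-bucket arrival curve with rate `ρ` and burst `b`. Its value at `0` is `b`, rather than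
the value `0` that some conventions impose on arrival curves. -/
def tokenBucket (ρ b t : ℝ) : ℝ :=
  ρ * t + b

/-- The rate-latency service curve with rate `R` and latency `T`. -/
def rateLatency (R T t : ℝ) : ℝ :=
  R * max (t - T) 0

theorem virtualDelay_le {α β : ℝ → ℝ} {t d : ℝ} (hd : 0 ≤ d) (h : α t ≤ β (t + d)) :
    virtualDelay α β t ≤ d :=
  csInf_le ⟨0, fun _ hx => hx.1⟩ ⟨hd, h⟩

section RateLatency

variable {α : ℝ → ℝ} {R T : ℝ}

theorem le_rateLatency_of_add_div_le {y s : ℝ} (hR : 0 < R) (h : T + y / R ≤ s) :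
    y ≤ rateLatency R T s :=
  (div_le_iff₀' hR).1 (le_max_of_le_left (le_sub_iff_add_le'.2 h))

theorem le_rateLatency_iff {y s : ℝ} (hR : 0 < R) (hy : 0 < y) :
    y ≤ rateLatency R T s ↔ T + y / R ≤ s := by
  refine ⟨fun h => ?_, le_rateLatency_of_add_div_le hR⟩
  have hmax : y / R ≤ max (s - T) 0 := (div_le_iff₀' hR).2 h
  have hsub : y / R ≤ s - T := (le_max_iff.1 hmax).resolve_right (div_pos hy hR).not_ge
  exact le_sub_iff_add_le'.1 hsub

theorem virtualDelay_rateLatency {t : ℝ} (hR : 0 < R) (hα : 0 < α t) :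
    virtualDelay α (rateLatency R T) t = max 0 (T + α t / R - t) := by
  have hset : {d | 0 ≤ d ∧ α t ≤ rateLatency R T (t + d)} = Ici (max 0 (T + α t / R - t)) := by
    ext d
    rw [mem_ofPred_eq, mem_Ici, le_rateLatency_iff hR hα, max_le_iff, sub_le_iff_le_add']
  rw [virtualDelay, hset, csInf_Ici]

theorem virtualDelay_rateLatency_le {b t : ℝ} (hR : 0 < R) (hbT : 0 ≤ T + b / R)
    (hα : α t ≤ tokenBucket R b t) : virtualDelay α (rateLatency R T) t ≤ T + b / R := by
  have hdiv : α t / R ≤ t + b / R := by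
    calc α t / R ≤ tokenBucket R b t / R := by gcongr
      _ = t + b / R := by rw [tokenBucket, add_div, mul_div_cancel_left₀ t hR.ne']
  exact virtualDelay_le hbT (le_rateLatency_of_add_div_le hR (by linarith))

theorem horizontal_deviation_token_bucket_rate_latency_general {b : ℝ} (hR : 0 < R)
    (hbT : 0 ≤ T + b / R) (hα : ∀ t, 0 ≤ t → α t ≤ tokenBucket R b t)
    (hpos : ∀ᶠ t in 𝓝[>] 0, 0 < α t) (hlim : Tendsto α (𝓝[>] 0) (𝓝 b)) :
    IsLUB (virtualDelay α (rateLatency R T) '' {t | 0 ≤ t}) (T + b / R) := by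
  refine ⟨forall_mem_image.2 fun t ht => virtualDelay_rateLatency_le hR hbT (hα t ht),
    fun c hc => ?_⟩
  have hdelay : Tendsto (fun t => T + α t / R - t) (𝓝[>] 0) (𝓝 (T + b / R)) := by
    have hid : Tendsto (fun t : ℝ => t) (𝓝[>] 0) (𝓝 0) :=
      tendsto_nhdsWithin_of_tendsto_nhds tendsto_id
    simpa only [sub_zero] using ((hlim.div_const R).const_add T).sub hid
  refine le_of_tendsto hdelay ?_
  filter_upwards [hpos, self_mem_nhdsWithin] with t hαt ht
  calc T + α t / R - t ≤ max 0 (T + α t / R - t) := le_max_right _ _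
    _ = virtualDelay α (rateLatency R T) t := (virtualDelay_rateLatency hR hαt).symm
    _ ≤ c := hc (mem_image_of_mem _ (mem_Ioi.1 ht).le)

end RateLatency

section TokenBucket

variable {ρ b : ℝ}

theorem tokenBucket_le_tokenBucket_of_rate_le {ρ' t : ℝ} (hρ : ρ ≤ ρ') (ht : 0 ≤ t) :
    tokenBucket ρ b t ≤ tokenBucket ρ' b t :=
  add_le_add_left (mul_le_mul_of_nonneg_right hρ ht) b

theorem tokenBucket_pos {t : ℝ} (hρ : 0 < ρ) (hb : 0 ≤ b) (ht : 0 < t) : 0 < tokenBucket ρ b t :=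
  add_pos_of_pos_of_nonneg (mul_pos hρ ht) hb

theorem tendsto_tokenBucket_nhdsGT_zero : Tendsto (tokenBucket ρ b) (𝓝[>] 0) (𝓝 b) :=
  tendsto_nhdsWithin_of_tendsto_nhds <|
    Continuous.tendsto' (by unfold tokenBucket; fun_prop) 0 b (by simp [tokenBucket])

end TokenBucket

/-- Horizontal deviation between a token-bucket arrival curve `α(t) = ρ·t + b`
and a rate-latency service curve `β(t) = R·max (t − T) 0` equals `T + b/R`. -/
theorem horizontal_deviation_token_bucket_rate_latency
    (b ρ R T : ℝ) (hb : 0 ≤ b) (hρ : 0 < ρ) (hR : ρ ≤ R) (hT : 0 ≤ T) :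
    sSup ((fun t : ℝ =>
        sInf {d : ℝ | 0 ≤ d ∧ ρ * t + b ≤ R * max ((t + d) - T) 0}) ''
      {t : ℝ | 0 ≤ t}) = T + b / R := by
  have hR₀ : 0 < R := hρ.trans_le hR
  exact (horizontal_deviation_token_bucket_rate_latency_general (α := tokenBucket ρ b) hR₀
    (by positivity) (fun _ => tokenBucket_le_tokenBucket_of_rate_le hR)
    (eventually_mem_nhdsWithin.mono fun _ => tokenBucket_pos hρ hb)
    tendsto_tokenBucket_nhdsGT_zero).csSup_eq (nonempty_Ici.image _)
end

section
/- Let A, m, B, d be positive real numbers and S ≥ 0 a real number. Define η = 1 + A·B/(m·d), ξ = −η·S − (η − 1)·A − d, ζ = (η − 1)·A·S, and f(x) = η·x² + ξ·x + ζ. Set x* = (−ξ − √(ξ² − 4·η·ζ)) / (2·η). Then f(x*) = 0, 0 ≤ x* ≤ S, and x* is the unique root of f in the interval [0, S]: every y ∈ [0, S] with f(y) = 0 satisfies y = x*. Moreover, if S > 0 then 0 < x* < S. -/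
/-!
The formula `(-b - √(b² - 4ac)) / (2a)` picks the root at which the slope `2ax + b` is nonpositive,
whatever the sign of `a`. A quadratic that changes sign from `+` to `-` on an interval has a root
there by the intermediate value theorem, and comparing its values at the endpoints with its Taylor
expansion at a root shows that the slope at the root is nonpositive; so the formula gives the only
root in the interval. With `p = (η - 1)A`, the quadratic of the theorem is
`(S - x)(p - ηx) - dx`, whose values at `0` and `S` are `pS` and `-dS`.
-/

open Set

section Quadratic

variable {a b c u v x : ℝ}

/-- The root of `a x² + b x + c` at which the quadratic is not increasing: the smaller root if
`0 < a`, the larger one if `a < 0`. The value is meaningless if `a = 0` or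
the discriminant is negative. -/
noncomputable def descendingRoot (a b c : ℝ) : ℝ :=
  (-b - √(discrim a b c)) / (2 * a)

lemma eq_descendingRoot_of_slope_nonpos (ha : a ≠ 0) (hx : a * x ^ 2 + b * x + c = 0)
    (hslope : 2 * a * x + b ≤ 0) : x = descendingRoot a b c := by
  have hdiscrim : discrim a b c = (2 * a * x + b) ^ 2 :=
    discrim_eq_sq_of_quadratic_eq_zero (by rwa [← sq])
  rw [descendingRoot, hdiscrim, Real.sqrt_sq_eq_abs, abs_of_nonpos hslope]
  field

lemma slope_nonpos_of_quadratic_eq_zero_of_mem_Ioo (hu : 0 ≤ a * u ^ 2 + b * u + c)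
    (hv : a * v ^ 2 + b * v + c ≤ 0) (hx : x ∈ Ioo u v) (hroot : a * x ^ 2 + b * x + c = 0) :
    2 * a * x + b ≤ 0 := by
  have hux : 0 < x - u := sub_pos.2 hx.1
  have hxv : 0 < v - x := sub_pos.2 hx.2
  have hchord_left : 2 * a * x + b + a * (u - x) ≤ 0 := by
    refine nonpos_of_mul_nonpos_right ?_ hux
    linear_combination hu + hroot
  have hchord_right : 2 * a * x + b + a * (v - x) ≤ 0 := by
    refine nonpos_of_mul_nonpos_right ?_ hxv
    linear_combination hv - hroot
  -- The slope at `x` is a weighted mean of the chord slopes over `[u, x]` and `[x, v]`.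
  have hmean : (v - u) * (2 * a * x + b) ≤ 0 := by
    linear_combination (v - x) * hchord_left + (x - u) * hchord_right
  exact nonpos_of_mul_nonpos_right hmean (sub_pos.2 (hx.1.trans hx.2))

lemma eq_descendingRoot_of_mem_Icc (ha : a ≠ 0) (hu : 0 < a * u ^ 2 + b * u + c)
    (hv : a * v ^ 2 + b * v + c < 0) (hx : x ∈ Icc u v) (hroot : a * x ^ 2 + b * x + c = 0) :
    x = descendingRoot a b c := by
  have hux : u ≠ x := by rintro rfl; exact hu.ne' hroot
  have hxv : x ≠ v := by rintro rfl; exact hv.ne hroot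
  exact eq_descendingRoot_of_slope_nonpos ha hroot <|
    slope_nonpos_of_quadratic_eq_zero_of_mem_Ioo hu.le hv.le
      ⟨hx.1.lt_of_ne hux, hx.2.lt_of_ne hxv⟩ hroot

lemma descendingRoot_mem_Ioo_and_quadratic_eq_zero (ha : a ≠ 0) (huv : u ≤ v)
    (hu : 0 < a * u ^ 2 + b * u + c) (hv : a * v ^ 2 + b * v + c < 0) :
    descendingRoot a b c ∈ Ioo u v ∧
      a * descendingRoot a b c ^ 2 + b * descendingRoot a b c + c = 0 := by
  have hcont : ContinuousOn (fun x ↦ a * x ^ 2 + b * x + c) (Icc u v) := by fun_prop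
  obtain ⟨x, hx, hroot⟩ := intermediate_value_Ioo' huv hcont ⟨hv, hu⟩
  rw [← eq_descendingRoot_of_mem_Icc ha hu hv (Ioo_subset_Icc_self hx) hroot]
  exact ⟨hx, hroot⟩

end Quadratic

theorem lemma1_unique_feasible_root_general {η p d S ξ ζ : ℝ}
    (hη : η ≠ 0) (hp : 0 < p) (hd : 0 < d) (hS : 0 ≤ S)
    (hξ : ξ = -η * S - p - d) (hζ : ζ = p * S) :
    (η * descendingRoot η ξ ζ ^ 2 + ξ * descendingRoot η ξ ζ + ζ = 0) ∧
    (0 ≤ descendingRoot η ξ ζ ∧ descendingRoot η ξ ζ ≤ S) ∧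
    (∀ y : ℝ, 0 ≤ y → y ≤ S → η * y ^ 2 + ξ * y + ζ = 0 → y = descendingRoot η ξ ζ) ∧
    (0 < S → 0 < descendingRoot η ξ ζ ∧ descendingRoot η ξ ζ < S) := by
  rcases hS.eq_or_lt with rfl | hS
  · have hzero : 0 = descendingRoot η ξ ζ :=
      eq_descendingRoot_of_slope_nonpos hη (by simp [hζ]) (by linarith)
    rw [← hzero]
    exact ⟨by simp [hζ], ⟨le_rfl, le_rfl⟩, fun y hy₀ hyS _ ↦ le_antisymm hyS hy₀,
      fun h ↦ (h.false).elim⟩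
  · have hval_zero : η * 0 ^ 2 + ξ * 0 + ζ = p * S := by rw [hζ]; ring
    have hval_S : η * S ^ 2 + ξ * S + ζ = -(d * S) := by rw [hξ, hζ]; ring
    have h₀ : 0 < η * 0 ^ 2 + ξ * 0 + ζ := hval_zero ▸ mul_pos hp hS
    have hS_neg : η * S ^ 2 + ξ * S + ζ < 0 := hval_S ▸ neg_neg_of_pos (mul_pos hd hS)
    obtain ⟨⟨hpos, hlt⟩, hroot⟩ :=
      descendingRoot_mem_Ioo_and_quadratic_eq_zero hη hS.le h₀ hS_neg
    exact ⟨hroot, ⟨hpos.le, hlt.le⟩,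
      fun y hy₀ hyS ↦ eq_descendingRoot_of_mem_Icc hη h₀ hS_neg ⟨hy₀, hyS⟩,
      fun _ ↦ ⟨hpos, hlt⟩⟩

/-- Lemma 1: the smaller root `x* = (−ξ − √(ξ² − 4ηζ))/(2η)` is the unique root
of `f(x) = η·x² + ξ·x + ζ` in `[0, S]`, and lies strictly inside when `S > 0`. -/
theorem lemma1_unique_feasible_root
    (A m B d S η ξ ζ xstar : ℝ)
    (hA : 0 < A) (hm : 0 < m) (hB : 0 < B) (hd : 0 < d) (hS : 0 ≤ S)
    (hη : η = 1 + A * B / (m * d))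
    (hξ : ξ = -η * S - (η - 1) * A - d)
    (hζ : ζ = (η - 1) * A * S)
    (hx : xstar = (-ξ - Real.sqrt (ξ ^ 2 - 4 * η * ζ)) / (2 * η)) :
    (η * xstar ^ 2 + ξ * xstar + ζ = 0) ∧
    (0 ≤ xstar ∧ xstar ≤ S) ∧
    (∀ y : ℝ, 0 ≤ y → y ≤ S → η * y ^ 2 + ξ * y + ζ = 0 → y = xstar) ∧
    (0 < S → 0 < xstar ∧ xstar < S) := by
  obtain rfl : xstar = descendingRoot η ξ ζ := hx
  have hη_one : 0 < η - 1 := by rw [hη, add_sub_cancel_left]; positivity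
  exact lemma1_unique_feasible_root_general (by linarith) (mul_pos hη_one hA) hd hS hξ hζ
end

section
/- Let A, m, B, d be positive real numbers and S ≥ 0 a real number. Define η = 1 + A·B/(m·d), ξ = −η·S − (η − 1)·A − d, and ζ = (η − 1)·A·S. Then the larger root of the quadratic η·x² + ξ·x + ζ, namely (−ξ + √(ξ² − 4·η·ζ)) / (2·η), is greater than or equal to S; if S > 0 it is strictly greater than S. -/
/-!
The quadratic opens upwards and takes the value `-(d * S)` at `S`. An upward-opening quadratic is
nonpositive only at points between its roots, so `S` does not exceed the larger root.
-/

lemma sq_two_mul_add_eq_discrim_add {R : Type*} [CommRing R] (a b c x : R) :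
    (2 * a * x + b) ^ 2 = discrim a b c + 4 * a * (a * x ^ 2 + b * x + c) := by
  rw [discrim]
  ring

section Real

variable {a b c x : ℝ}

lemma le_larger_root_of_quadratic_nonpos (ha : 0 < a) (hx : a * x ^ 2 + b * x + c ≤ 0) :
    x ≤ (-b + √(discrim a b c)) / (2 * a) := by
  have hsq : (2 * a * x + b) ^ 2 ≤ discrim a b c := by
    rw [sq_two_mul_add_eq_discrim_add a b c x]
    exact add_le_of_nonpos_right (mul_nonpos_of_nonneg_of_nonpos (by positivity) hx)
  have hsqrt : 2 * a * x + b ≤ √(discrim a b c) := Real.le_sqrt_of_sq_le hsq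
  rw [le_div_iff₀ (by positivity)]
  linarith

lemma lt_larger_root_of_quadratic_neg (ha : 0 < a) (hx : a * x ^ 2 + b * x + c < 0) :
    x < (-b + √(discrim a b c)) / (2 * a) := by
  have hsq : (2 * a * x + b) ^ 2 < discrim a b c := by
    rw [sq_two_mul_add_eq_discrim_add a b c x]
    exact add_lt_of_neg_right _ (mul_neg_of_pos_of_neg (by positivity) hx)
  have hsqrt : 2 * a * x + b < √(discrim a b c) := Real.lt_sqrt_of_sq_lt hsq
  rw [lt_div_iff₀ (by positivity)]
  linarith

end Real

theorem quadratic_larger_root_beyond_S_general {A d S η ξ ζ : ℝ} (hη : 0 < η) (hdS : 0 ≤ d * S)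
    (hξ : ξ = -η * S - (η - 1) * A - d) (hζ : ζ = (η - 1) * A * S) :
    S ≤ (-ξ + √(ξ ^ 2 - 4 * η * ζ)) / (2 * η) ∧
    (0 < d * S → S < (-ξ + √(ξ ^ 2 - 4 * η * ζ)) / (2 * η)) := by
  have hvalue : η * S ^ 2 + ξ * S + ζ = -(d * S) := by
    rw [hξ, hζ]
    ring
  exact ⟨le_larger_root_of_quadratic_nonpos hη (hvalue.trans_le (neg_nonpos.mpr hdS)),
    fun hdS_pos ↦ lt_larger_root_of_quadratic_neg hη (hvalue.trans_lt (neg_lt_zero.mpr hdS_pos))⟩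

/-- The larger root of the quadratic from Lemma 1 lies at or beyond `S`,
and strictly beyond when `S > 0`. -/
theorem quadratic_larger_root_beyond_S
    (A m B d S η ξ ζ : ℝ)
    (hA : 0 < A) (hm : 0 < m) (hB : 0 < B) (hd : 0 < d) (hS : 0 ≤ S)
    (hη : η = 1 + A * B / (m * d))
    (hξ : ξ = -η * S - (η - 1) * A - d)
    (hζ : ζ = (η - 1) * A * S) :
    S ≤ (-ξ + Real.sqrt (ξ ^ 2 - 4 * η * ζ)) / (2 * η) ∧
    (0 < S → S < (-ξ + Real.sqrt (ξ ^ 2 - 4 * η * ζ)) / (2 * η)) := by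
  have hη_pos : 0 < η := by rw [hη]; positivity
  exact (quadratic_larger_root_beyond_S_general hη_pos (mul_nonneg hd.le hS) hξ hζ).imp_right
    fun hlt hS_pos ↦ hlt (mul_pos hd hS_pos)
end

section
/- Let A, m, B, d be positive real numbers and S a real number with 0 ≤ S < A. Define η = 1 + A·B/(m·d), ξ = −η·S − (η − 1)·A − d, ζ = (η − 1)·A·S, and x* = (−ξ − √(ξ² − 4·η·ζ)) / (2·η). Then 0 ≤ x* ≤ S < A, Q(x*) := B/d + m/A − m/(A − x*) > 0, and B/(d + S − x*) + m/(A − x*) = B/d + m/A. -/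
/-!
With `k = A * B / (m * d)`, clearing denominators shows that class `j` keeps its deadline after
giving away `x` exactly when `k * (A - x) * (S - x) = x * (d + S - x)`. The difference of the two
sides is a convex quadratic in `x` whose values at `0` and `S`, `k * A * S` and `-(d * S)`, have
opposite signs, so its lesser root lies between `0` and `S`. That root cannot reach `A` or `d + S`:
between `0` and `S`, but at or past either of these bounds, the quadratic is negative.
-/

/-- The lesser root of `a * x ^ 2 + b * x + c` for `0 < a`. It is a root only if the discriminant
is nonnegative, since `√` vanishes on negative numbers. -/
noncomputable def lesserRoot (a b c : ℝ) : ℝ :=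
  (-b - √(discrim a b c)) / (2 * a)

section LesserRoot

variable {a b c y : ℝ}

theorem discrim_nonneg_of_quadratic_nonpos (ha : 0 < a) (hy : a * (y * y) + b * y + c ≤ 0) :
    0 ≤ discrim a b c := by
  have hsq : discrim a b c = (2 * a * y + b) ^ 2 - 4 * a * (a * (y * y) + b * y + c) := by
    rw [discrim]; ring
  rw [hsq, sub_nonneg]
  exact (mul_nonpos_of_nonneg_of_nonpos (by positivity) hy).trans (sq_nonneg _)

theorem quadratic_lesserRoot_eq_zero (ha : a ≠ 0) (hdiscrim : 0 ≤ discrim a b c) :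
    a * (lesserRoot a b c * lesserRoot a b c) + b * lesserRoot a b c + c = 0 :=
  (quadratic_eq_zero_iff ha (Real.mul_self_sqrt hdiscrim).symm _).mpr (Or.inr rfl)

theorem lesserRoot_le_of_quadratic_nonpos (ha : 0 < a) (hy : a * (y * y) + b * y + c ≤ 0) :
    lesserRoot a b c ≤ y := by
  have hsq : (-(2 * a * y + b)) ^ 2 ≤ discrim a b c := by
    rw [discrim]
    linear_combination 4 * a * hy
  rw [lesserRoot, div_le_iff₀ (by positivity)]
  linarith [Real.le_sqrt_of_sq_le hsq]

theorem le_lesserRoot_of_quadratic_nonneg (ha : 0 < a) (hvertex : 2 * a * y + b ≤ 0)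
    (hy : 0 ≤ a * (y * y) + b * y + c) : y ≤ lesserRoot a b c := by
  have hsq : discrim a b c ≤ (-(2 * a * y + b)) ^ 2 := by
    rw [discrim]
    linear_combination 4 * a * hy
  rw [lesserRoot, le_div_iff₀ (by positivity)]
  linarith [Real.sqrt_le_iff.mpr ⟨neg_nonneg.mpr hvertex, hsq⟩]

end LesserRoot

/-- The decrease of class `j`'s delay bound when `x` of the extra bandwidth `S` goes to the
higher-priority classes, up to the factor in `delay_sub_delay_eq`, which is positive for `x` below
`A` and `d + S`; the parameter `k` stands for `A * B / (m * d)`. -/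
def deadlineSlack (k A d S x : ℝ) : ℝ :=
  k * (A - x) * (S - x) - x * (d + S - x)

/-- The extra bandwidth `x*` given to the higher-priority classes: the lesser root of
`deadlineSlack k A d S`, as a function of its coefficients `η = 1 + k`, `ξ` and `ζ`. -/
noncomputable def higherPriorityShare (k A d S : ℝ) : ℝ :=
  lesserRoot (1 + k) (-(1 + k) * S - k * A - d) (k * A * S)

section DeadlineSlack

variable {k A B d m S x : ℝ}

theorem delay_sub_delay_eq (hA : A ≠ 0) (hm : m ≠ 0) (hd : d ≠ 0) (hAx : A - x ≠ 0)
    (hdx : d + S - x ≠ 0) :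
    (B / d + m / A) - (B / (d + S - x) + m / (A - x)) =
      m / (A * (A - x) * (d + S - x)) * deadlineSlack (A * B / (m * d)) A d S x := by
  rw [deadlineSlack]
  field_simp
  ring

theorem quadratic_eq_deadlineSlack (k A d S x : ℝ) :
    (1 + k) * (x * x) + (-(1 + k) * S - k * A - d) * x + k * A * S = deadlineSlack k A d S x := by
  rw [deadlineSlack]
  ring

theorem deadlineSlack_zero (k A d S : ℝ) : deadlineSlack k A d S 0 = k * A * S := by
  simp [deadlineSlack]

theorem deadlineSlack_self (k A d S : ℝ) : deadlineSlack k A d S S = -(d * S) := by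
  simp [deadlineSlack, mul_comm]

theorem higherPriorityShare_le_of_deadlineSlack_nonpos (hk : 0 < k)
    (hx : deadlineSlack k A d S x ≤ 0) : higherPriorityShare k A d S ≤ x :=
  lesserRoot_le_of_quadratic_nonpos (by positivity) (by rwa [quadratic_eq_deadlineSlack])

theorem le_higherPriorityShare_of_deadlineSlack_nonneg (hk : 0 < k)
    (hvertex : 2 * (1 + k) * x + (-(1 + k) * S - k * A - d) ≤ 0)
    (hx : 0 ≤ deadlineSlack k A d S x) : x ≤ higherPriorityShare k A d S :=
  le_lesserRoot_of_quadratic_nonneg (by positivity) hvertex (by rwa [quadratic_eq_deadlineSlack])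

theorem higherPriorityShare_mem_uIcc (hk : 0 < k) (hA : 0 < A) (hd : 0 < d) :
    higherPriorityShare k A d S ∈ Set.uIcc 0 S := by
  have hkA : 0 < k * A := mul_pos hk hA
  rw [Set.mem_uIcc]
  rcases le_total 0 S with hS | hS
  · have hηS : 0 ≤ (1 + k) * S := by positivity
    refine Or.inl ⟨le_higherPriorityShare_of_deadlineSlack_nonneg hk (by linarith) ?_,
      higherPriorityShare_le_of_deadlineSlack_nonpos hk ?_⟩
    · rw [deadlineSlack_zero]; positivity
    · rw [deadlineSlack_self, neg_nonpos]; positivity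
  · have hηS : (1 + k) * S ≤ 0 := mul_nonpos_of_nonneg_of_nonpos (by positivity) hS
    refine Or.inr ⟨le_higherPriorityShare_of_deadlineSlack_nonneg hk (by linarith) ?_,
      higherPriorityShare_le_of_deadlineSlack_nonpos hk ?_⟩
    · rw [deadlineSlack_self, neg_nonneg]; exact mul_nonpos_of_nonneg_of_nonpos hd.le hS
    · rw [deadlineSlack_zero]; exact mul_nonpos_of_nonneg_of_nonpos hkA.le hS

theorem exists_deadlineSlack_nonpos (hk : 0 ≤ k) (hA : 0 ≤ A) (hd : 0 ≤ d) :
    ∃ x, deadlineSlack k A d S x ≤ 0 := by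
  rcases le_total 0 S with hS | hS
  · exact ⟨S, by rw [deadlineSlack_self, neg_nonpos]; positivity⟩
  · exact ⟨0, by
      rw [deadlineSlack_zero]; exact mul_nonpos_of_nonneg_of_nonpos (mul_nonneg hk hA) hS⟩

theorem deadlineSlack_higherPriorityShare (hk : 0 ≤ k) (hA : 0 ≤ A) (hd : 0 ≤ d) :
    deadlineSlack k A d S (higherPriorityShare k A d S) = 0 := by
  obtain ⟨x, hx⟩ := exists_deadlineSlack_nonpos (S := S) hk hA hd
  rw [← quadratic_eq_deadlineSlack] at hx ⊢
  have hη : 0 < 1 + k := by positivity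
  exact quadratic_lesserRoot_eq_zero hη.ne' (discrim_nonneg_of_quadratic_nonpos hη hx)

theorem lt_of_deadlineSlack_nonneg (hk : 0 < k) (hA : 0 < A) (hd : 0 < d)
    (hx : x ∈ Set.uIcc 0 S) (hslack : 0 ≤ deadlineSlack k A d S x) : x < A ∧ x < d + S := by
  rw [deadlineSlack, sub_nonneg] at hslack
  rcases Set.mem_uIcc.mp hx with ⟨_, hxS⟩ | ⟨_, hx0⟩
  · have hxd : x < d + S := by linarith
    refine ⟨lt_of_not_ge fun hAx => hslack.not_gt ?_, hxd⟩
    calc k * (A - x) * (S - x) ≤ 0 :=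
          mul_nonpos_of_nonpos_of_nonneg
            (mul_nonpos_of_nonneg_of_nonpos hk.le (sub_nonpos.mpr hAx)) (sub_nonneg.mpr hxS)
      _ < x * (d + S - x) := mul_pos (hA.trans_le hAx) (sub_pos.mpr hxd)
  · have hxA : x < A := hx0.trans_lt hA
    refine ⟨hxA, lt_of_not_ge fun hdx => hslack.not_gt ?_⟩
    calc k * (A - x) * (S - x) < 0 :=
          mul_neg_of_pos_of_neg (mul_pos hk (sub_pos.mpr hxA)) (by linarith)
      _ ≤ x * (d + S - x) := mul_nonneg_of_nonpos_of_nonpos hx0 (sub_nonpos.mpr hdx)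

end DeadlineSlack

theorem theorem1_recursion_step_preserves_deadline_general
    (A m B d S η ξ ζ xstar : ℝ)
    (hA : 0 < A) (hm : 0 < m) (hB : 0 < B) (hd : 0 < d)
    (hη : η = 1 + A * B / (m * d))
    (hξ : ξ = -η * S - (η - 1) * A - d)
    (hζ : ζ = (η - 1) * A * S)
    (hx : xstar = (-ξ - Real.sqrt (ξ ^ 2 - 4 * η * ζ)) / (2 * η)) :
    (xstar ∈ Set.uIcc 0 S ∧ xstar < A ∧ xstar < d + S) ∧
    0 < B / d + m / A - m / (A - xstar) ∧
    B / (d + S - xstar) + m / (A - xstar) = B / d + m / A := by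
  have hk : 0 < A * B / (m * d) := by positivity
  have hshare : xstar = higherPriorityShare (A * B / (m * d)) A d S := by
    rw [hx, hξ, hζ, hη, add_sub_cancel_left]; rfl
  have hmem : xstar ∈ Set.uIcc 0 S := hshare ▸ higherPriorityShare_mem_uIcc hk hA hd
  have hslack : deadlineSlack (A * B / (m * d)) A d S xstar = 0 :=
    hshare ▸ deadlineSlack_higherPriorityShare hk.le hA.le hd.le
  obtain ⟨hxA, hxd⟩ := lt_of_deadlineSlack_nonneg hk hA hd hmem hslack.ge
  have hdelay := delay_sub_delay_eq (B := B) hA.ne' hm.ne' hd.ne' (sub_pos.mpr hxA).ne'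
    (sub_pos.mpr hxd).ne'
  rw [hslack, mul_zero, sub_eq_zero] at hdelay
  refine ⟨⟨hmem, hxA, hxd⟩, ?_, hdelay.symm⟩
  rw [hdelay, add_sub_cancel_right]
  exact div_pos hB (sub_pos.mpr hxd)

/-- Correctness of one recursion step of Theorem 1: giving extra bandwidth `x*`
to the higher-priority classes and `S − x*` to class `j` exactly preserves
class `j`'s local deadline `B/d + m/A` (up to the common constant `l/C`). -/
theorem theorem1_recursion_step_preserves_deadline
    (A m B d S η ξ ζ xstar : ℝ)
    (hA : 0 < A) (hm : 0 < m) (hB : 0 < B) (hd : 0 < d)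
    (hS0 : 0 ≤ S) (hSA : S < A)
    (hη : η = 1 + A * B / (m * d))
    (hξ : ξ = -η * S - (η - 1) * A - d)
    (hζ : ζ = (η - 1) * A * S)
    (hx : xstar = (-ξ - Real.sqrt (ξ ^ 2 - 4 * η * ζ)) / (2 * η)) :
    (0 ≤ xstar ∧ xstar ≤ S ∧ S < A) ∧
    0 < B / d + m / A - m / (A - xstar) ∧
    B / (d + S - xstar) + m / (A - xstar) = B / d + m / A := by
  obtain ⟨⟨hmem, -⟩, hpreserved⟩ :=
    theorem1_recursion_step_preserves_deadline_general A m B d S η ξ ζ xstar hA hm hB hd hη hξ hζ hx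
  rw [Set.uIcc_of_le hS0] at hmem
  exact ⟨⟨hmem.1, hmem.2, hSA⟩, hpreserved⟩
end

section
/- Let N ≥ 1 be a natural number and, for each n ∈ {1, …, N}, let A_n, m_n, B_n, d_n be positive real numbers. Let S₀ ≥ 0. Define a sequence σ_N, σ_{N−1}, …, σ_0 by σ_N = S₀ and, for n = N down to 1, σ_{n−1} = (−ξ_n − √(ξ_n² − 4·η_n·ζ_n)) / (2·η_n), where η_n = 1 + A_n·B_n/(m_n·d_n), ξ_n = −η_n·σ_n − (η_n − 1)·A_n − d_n, and ζ_n = (η_n − 1)·A_n·σ_n. Then the sequence is well defined and satisfies 0 ≤ σ_0 ≤ σ_1 ≤ … ≤ σ_N = S₀; consequently the extra bandwidths Φ_n := σ_n − σ_{n−1} for n = 1, …, N together with Φ_0 := σ_0 are all nonnegative and satisfy Φ_0 + Σ_{n=1}^{N} Φ_n = S₀. -/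
/-!
The value `σ_{n-1}` is the smaller root of the upward parabola `p(x) = η_n x² + ξ_n x + ζ_n`. Here
`p(0) = ζ_n ≥ 0` to the left of the vertex, while `p(σ_n) = -d_n σ_n ≤ 0`. The sign at `σ_n` makes
the discriminant nonnegative, so the square root is a genuine one, and the two signs together place
the smaller root in `[0, σ_n]`. Descending from `σ_N = S₀` gives the chain of inequalities, and the
retained bandwidths telescope.
-/

/-- The smaller root of the quadratic `a x² + b x + c` with `0 < a`, by the closed formula. If the
discriminant is negative, `√` returns `0` and the value is the vertex `-b / (2a)`, which is not a
root. -/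
noncomputable def smallerRoot (a b c : ℝ) : ℝ :=
  (-b - √(discrim a b c)) / (2 * a)

/-- The paper's `g_n` (Lemma 1): the part of the extra bandwidth `s` that a class passes on to the
higher priorities. Here `η = 1 + A_n B_n / (m_n d_n)`, `a = A_n` and `d = d_n`; the coefficients
`ξ_n` and `ζ_n` are written out. -/
noncomputable def passedBandwidth (η a d s : ℝ) : ℝ :=
  smallerRoot η (-η * s - (η - 1) * a - d) ((η - 1) * a * s)

section Quadratic

lemma discrim_eq_sq_sub {R : Type*} [CommRing R] (a b c x : R) :
    discrim a b c = (2 * a * x + b) ^ 2 - 4 * a * (a * x ^ 2 + b * x + c) := by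
  rw [discrim]
  ring

variable {a b c x : ℝ}

lemma le_smallerRoot (ha : 0 < a) (hvertex : 2 * a * x + b ≤ 0)
    (hx : 0 ≤ a * x ^ 2 + b * x + c) : x ≤ smallerRoot a b c := by
  have hdiscrim : discrim a b c ≤ (-(2 * a * x + b)) ^ 2 := by
    rw [discrim_eq_sq_sub a b c x, neg_sq]
    exact sub_le_self _ (mul_nonneg (by positivity) hx)
  have hsqrt : √(discrim a b c) ≤ -(2 * a * x + b) :=
    Real.sqrt_le_iff.2 ⟨neg_nonneg.2 hvertex, hdiscrim⟩
  rw [smallerRoot, le_div_iff₀ (by positivity)]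
  linarith

lemma smallerRoot_le (ha : 0 < a) (hx : a * x ^ 2 + b * x + c ≤ 0) : smallerRoot a b c ≤ x := by
  have hdiscrim : (2 * a * x + b) ^ 2 ≤ discrim a b c := by
    rw [discrim_eq_sq_sub a b c x, le_sub_self_iff]
    exact mul_nonpos_of_nonneg_of_nonpos (by positivity) hx
  have hsqrt : -√(discrim a b c) ≤ 2 * a * x + b := Real.neg_sqrt_le_of_sq_le hdiscrim
  rw [smallerRoot, div_le_iff₀ (by positivity)]
  linarith

end Quadratic

section PassedBandwidth

variable {η a d s : ℝ}

lemma passedBandwidth_nonneg (hη : 1 ≤ η) (ha : 0 ≤ a) (hd : 0 ≤ d) (hs : 0 ≤ s) :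
    0 ≤ passedBandwidth η a d s := by
  have hη₀ : 0 < η := one_pos.trans_le hη
  have hηs : 0 ≤ η * s := mul_nonneg hη₀.le hs
  have hηa : 0 ≤ (η - 1) * a := mul_nonneg (sub_nonneg.2 hη) ha
  have hconst : 0 ≤ (η - 1) * a * s := mul_nonneg hηa hs
  exact le_smallerRoot hη₀ (by linarith) (by linarith)

lemma passedBandwidth_le (hη : 0 < η) (hd : 0 ≤ d) (hs : 0 ≤ s) : passedBandwidth η a d s ≤ s := by
  refine smallerRoot_le hη ?_
  calc η * s ^ 2 + (-η * s - (η - 1) * a - d) * s + (η - 1) * a * s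
      = -(d * s) := by ring
    _ ≤ 0 := neg_nonpos.2 (mul_nonneg hd hs)

end PassedBandwidth

lemma sum_Icc_one_sub_pred {M : Type*} [AddCommGroup M] (f : ℕ → M) (N : ℕ) :
    ∑ n ∈ Finset.Icc 1 N, (f n - f (n - 1)) = f N - f 0 := by
  induction N with
  | zero => simp
  | succ N ih =>
    rw [Finset.sum_Icc_succ_top N.succ_pos, ih, Nat.add_sub_cancel, sub_add_sub_cancel']

/-- Well-definedness of the recursion in Theorem 1: the sequence
`σ_N = S₀`, `σ_{n−1} = (−ξ_n − √(ξ_n² − 4η_nζ_n))/(2η_n)` is monotone,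
`0 ≤ σ_0 ≤ … ≤ σ_N = S₀`, so the extra bandwidths `Φ_n = σ_n − σ_{n−1}` and
`Φ_0 = σ_0` are nonnegative and sum to `S₀`. -/
theorem theorem1_recursion_well_defined
    (N : ℕ) (hN : 1 ≤ N)
    (A m B d : ℕ → ℝ)
    (hA : ∀ n, 1 ≤ n → n ≤ N → 0 < A n)
    (hm : ∀ n, 1 ≤ n → n ≤ N → 0 < m n)
    (hB : ∀ n, 1 ≤ n → n ≤ N → 0 < B n)
    (hd : ∀ n, 1 ≤ n → n ≤ N → 0 < d n)
    (S₀ : ℝ) (hS₀ : 0 ≤ S₀)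
    (σ : ℕ → ℝ) (hσN : σ N = S₀)
    (hrec : ∀ n, 1 ≤ n → n ≤ N →
      σ (n - 1) =
        (-(-(1 + A n * B n / (m n * d n)) * σ n -
            ((1 + A n * B n / (m n * d n)) - 1) * A n - d n) -
          Real.sqrt ((-(1 + A n * B n / (m n * d n)) * σ n -
              ((1 + A n * B n / (m n * d n)) - 1) * A n - d n) ^ 2 -
            4 * (1 + A n * B n / (m n * d n)) *
              (((1 + A n * B n / (m n * d n)) - 1) * A n * σ n))) /
          (2 * (1 + A n * B n / (m n * d n)))) :
    0 ≤ σ 0 ∧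
    (∀ n, 1 ≤ n → n ≤ N → σ (n - 1) ≤ σ n) ∧
    (∀ n, 1 ≤ n → n ≤ N → 0 ≤ σ n - σ (n - 1)) ∧
    σ 0 + ∑ n ∈ Finset.Icc 1 N, (σ n - σ (n - 1)) = S₀ := by
  let η n := 1 + A n * B n / (m n * d n)
  have hη : ∀ n, 1 ≤ n → n ≤ N → 1 ≤ η n := fun n h1 hn ↦
    le_add_of_nonneg_right <| div_nonneg (mul_pos (hA n h1 hn) (hB n h1 hn)).le
      (mul_pos (hm n h1 hn) (hd n h1 hn)).le
  have hstep : ∀ n, 1 ≤ n → n ≤ N → σ (n - 1) = passedBandwidth (η n) (A n) (d n) (σ n) := hrec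
  have hnonneg : ∀ n ≤ N, 0 ≤ σ n := by
    intro n hn
    induction hn using Nat.decreasingInduction with
    | self => exact hσN ▸ hS₀
    | of_succ k hk ih =>
      have h1 : 1 ≤ k + 1 := k.succ_pos
      rw [← k.add_sub_cancel (m := 1), hstep (k + 1) h1 hk]
      exact passedBandwidth_nonneg (hη _ h1 hk) (hA _ h1 hk).le (hd _ h1 hk).le ih
  have hmono : ∀ n, 1 ≤ n → n ≤ N → σ (n - 1) ≤ σ n := fun n h1 hn ↦
    hstep n h1 hn ▸
      passedBandwidth_le (one_pos.trans_le (hη n h1 hn)) (hd n h1 hn).le (hnonneg n hn)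
  refine ⟨hnonneg 0 N.zero_le, hmono, fun n h1 hn ↦ sub_nonneg.2 (hmono n h1 hn), ?_⟩
  rw [sum_Icc_one_sub_pred, add_sub_cancel, hσN]
end
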